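/- Let G ∈ Ω satisfy lim_{t→∞} G(t^λ)/G(t) = λ^α for every λ > 0, with α ≥ 0, and let 0 ≤ T ∈ M_G. If for some constant c > 0 one has lim_{n→∞} (1/G(n+1)) ∑_{k=0}^n μ(k,T) = c, then lim_{t→∞} (1/G(e^t)) Tr(T^{1+1/t}) = c·Γ(α+1), where Γ is the Gamma function. -/

import Mathlib

open MeasureTheory Filter Topology
open scoped ENNReal

noncomputable section

variable {H : Type*} [NormedAddCommGroup H] [InnerProductSpace ℂ H] [CompleteSpace H]

/-- `sv T n`: the `n`-th singular value of a (bounded) operator `T`, i.e. the distance in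
operator norm from `T` to the operators of rank at most `n`. -/
def sv (T : H →L[ℂ] H) (n : ℕ) : ℝ :=
  sInf {r : ℝ | ∃ F : H →L[ℂ] H,
    LinearMap.rank (F : H →ₗ[ℂ] H) ≤ (n : Cardinal) ∧ ‖T - F‖ = r}

/-- `lam` is *the* eigenvalue sequence of `T`: moduli are non-increasing and every nonzero
value `z` occurs exactly as many times as its algebraic multiplicity, i.e. the dimension of
the generalized eigenspace of `T` at `z` (this also forces padding by zeros when `T` has
only finitely many nonzero eigenvalues). -/
def IsEigenvalueSeq (T : H →L[ℂ] H) (lam : ℕ → ℂ) : Prop :=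
  Antitone (fun n => ‖lam n‖) ∧
  ∀ z : ℂ, z ≠ 0 →
    {n : ℕ | lam n = z}.Finite ∧
      Nat.card {n : ℕ | lam n = z} =
        Module.finrank ℂ (Module.End.maxGenEigenspace (↑T : H →ₗ[ℂ] H) z)

/-- The class `Ω`: increasing concave functions `G : [0,∞) → [0,∞)` diverging at `+∞`,
with `G(t) = O(t)` as `t → 0+` and `G(2t)/G(t) → 1`. -/
structure MemOmega (G : ℝ → ℝ) : Prop where
  nonneg : ∀ t : ℝ, 0 ≤ t → 0 ≤ G t
  mono : MonotoneOn G (Set.Ici 0)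
  concave : ConcaveOn ℝ (Set.Ici 0) G
  to_top : Tendsto G atTop atTop
  bigO_zero : (fun t => G t) =O[nhdsWithin 0 (Set.Ioi (0:ℝ))] fun t => t
  doubling : Tendsto (fun t => G (2 * t) / G t) atTop (nhds 1)

/-- `∑_n μ(n,T)^p` as an extended real (so that divergence is meaningful). -/
def zsum (T : H →L[ℂ] H) (p : ℝ) : ℝ≥0∞ := ∑' n : ℕ, ENNReal.ofReal (sv T n ^ p)

/-- Membership in `L_G`: `ess sup_{t>0} ‖T‖_{1+1/t} / G(e^t) < ∞`. -/
def MemLG (G : ℝ → ℝ) (T : H →L[ℂ] H) : Prop :=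
  ∃ C : ℝ, ∀ᵐ t ∂(volume.restrict (Set.Ioi (0:ℝ))),
    (zsum T (1 + 1 / t)) ^ (1 / (1 + 1 / t)) ≤ ENNReal.ofReal (C * G (Real.exp t))

/-- Membership in `Z_G`: `limsup_{t→∞} Tr(|T|^{1+1/t}) / G(e^t) < ∞`. -/
def MemZG (G : ℝ → ℝ) (T : H →L[ℂ] H) : Prop :=
  ∃ C : ℝ, ∀ᶠ t : ℝ in atTop, zsum T (1 + 1 / t) ≤ ENNReal.ofReal (C * G (Real.exp t))

/-- Membership in the Lorentz ideal `M_G`: `sup_n (1/G(n+1)) ∑_{k=0}^n μ(k,T) < ∞`. -/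
def MemMG (G : ℝ → ℝ) (T : H →L[ℂ] H) : Prop :=
  ∃ C : ℝ, ∀ n : ℕ, (∑ k ∈ Finset.range (n + 1), sv T k) ≤ C * G ((n : ℝ) + 1)

/-!
Put `g u = G (exp u)`, a regularly varying function of index `α`, and let `x` be the sequence of
singular values, rescaled so that `x ≤ 1`. Writing `x n ^ (1 / t) = exp (-s n / t)` with
`s n = -log (x n)`, the sum `∑ x n ^ (1 + 1 / t)` is the Laplace transform at `1 / t` of the measure
with mass `x n` at `s n`. By Karamata's Abelian theorem it suffices to show that its distribution
function `B u`, the sum of the terms `x n ≥ exp (-u)`, satisfies `B u / g u → c`, knowing this for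
the partial sums `A u = ∑_{n < exp u} x n`.

Discarding the terms below `exp (-u)` from `A u` costs at most `1`, so `A u - 1 ≤ B u`. Conversely
`A` grows subexponentially and `(n + 1) * x n ≤ A (log (n + 1))`, so for each `l > 1` and `u` large
all terms `x n ≥ exp (-u)` have `n + 1 ≤ exp (l * u)`, whence `B u ≤ A (l * u) ∼ c * l ^ α * g u`.
Now let `l → 1`.
-/

/-- `g` is regularly varying at infinity with index `α`, in Karamata's sense. -/
structure IsRegularlyVarying (g : ℝ → ℝ) (α : ℝ) : Prop where
  eventually_pos : ∀ᶠ u in atTop, 0 < g u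
  tendsto_div : ∀ l : ℝ, 0 < l → Tendsto (fun u ↦ g (l * u) / g u) atTop (𝓝 (l ^ α))

section RegularVariation

variable {f g : ℝ → ℝ} {α c : ℝ}

lemma IsRegularlyVarying.tendsto_comp_mul_div (hg : IsRegularlyVarying g α)
    (hfg : Tendsto (fun u ↦ f u / g u) atTop (𝓝 c)) {l : ℝ} (hl : 0 < l) :
    Tendsto (fun u ↦ f (l * u) / g u) atTop (𝓝 (c * l ^ α)) := by
  have hlu : Tendsto (fun u ↦ l * u) atTop atTop := tendsto_id.const_mul_atTop hl
  refine ((hfg.comp hlu).mul (hg.tendsto_div l hl)).congr' ?_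
  filter_upwards [hlu.eventually hg.eventually_pos] with u hu
  simp only [Function.comp_apply]
  field_simp

lemma IsRegularlyVarying.isBigO_of_tendsto_div (hg : IsRegularlyVarying g α)
    (hfg : Tendsto (fun u ↦ f u / g u) atTop (𝓝 c)) : f =O[atTop] g :=
  Asymptotics.isBigO_of_div_tendsto_nhds
    (hg.eventually_pos.mono fun _ hu hu0 ↦ absurd hu0 hu.ne') c hfg

lemma IsRegularlyVarying.isBigO_comp_mul (hg : IsRegularlyVarying g α) {l : ℝ} (hl : 0 < l) :
    (fun u ↦ g (l * u)) =O[atTop] g :=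
  hg.isBigO_of_tendsto_div (hg.tendsto_div l hl)

lemma exists_norm_comp_two_pow_mul_le {E : Type*} [SeminormedAddCommGroup E] {g : ℝ → E}
    (hg : (fun u ↦ g (2 * u)) =O[atTop] g) :
    ∃ m : ℕ, ∀ᶠ u in atTop, ∀ k : ℕ, ‖g (2 ^ k * u)‖ ≤ (2 ^ k) ^ m * ‖g u‖ := by
  obtain ⟨D, hD⟩ := hg.bound
  obtain ⟨m, hm⟩ := pow_unbounded_of_one_lt D (one_lt_two : (1 : ℝ) < 2)
  refine ⟨m, ?_⟩
  filter_upwards [eventually_forall_ge_atTop.2 hD, eventually_ge_atTop 0] with u hDu hu k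
  induction k with
  | zero => simp
  | succ k ih =>
    have hku : u ≤ 2 ^ k * u := le_mul_of_one_le_left hu (one_le_pow₀ one_le_two)
    calc ‖g (2 ^ (k + 1) * u)‖ = ‖g (2 * (2 ^ k * u))‖ := by ring_nf
      _ ≤ D * ‖g (2 ^ k * u)‖ := hDu _ hku
      _ ≤ 2 ^ m * ((2 ^ k) ^ m * ‖g u‖) := by gcongr
      _ = (2 ^ (k + 1)) ^ m * ‖g u‖ := by ring

/-- A Potter-type bound: it dominates `f (v * u)` uniformly in `v ≥ 0`, not only for `v` in
compact sets. -/
lemma exists_comp_mul_le_of_monotone {E : Type*} [SeminormedAddCommGroup E] {g : ℝ → E}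
    (hf : Monotone f) (hfg : f =O[atTop] g) (hg : (fun u ↦ g (2 * u)) =O[atTop] g) :
    ∃ (C : ℝ) (m : ℕ), ∀ᶠ u in atTop, ∀ v, 0 ≤ v → f (v * u) ≤ C * (1 + v ^ m) * ‖g u‖ := by
  obtain ⟨C, hC, hfC⟩ := hfg.exists_nonneg
  obtain ⟨m, hm⟩ := exists_norm_comp_two_pow_mul_le hg
  refine ⟨C * 2 ^ m, m, ?_⟩
  filter_upwards [eventually_forall_ge_atTop.2 hfC.bound, hm, eventually_ge_atTop 0]
    with u hfu hgu hu v hv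
  obtain ⟨k, hvk, hkv⟩ : ∃ k : ℕ, v ≤ 2 ^ k ∧ ((2 : ℝ) ^ k) ^ m ≤ 2 ^ m * (1 + v ^ m) := by
    rcases le_total v 1 with hv1 | hv1
    · refine ⟨0, by simpa using hv1, ?_⟩
      have : (1 : ℝ) ≤ 2 ^ m := one_le_pow₀ one_le_two
      simpa using this.trans (le_mul_of_one_le_right (by positivity) (by simpa using by positivity))
    · obtain ⟨k, hk, hk'⟩ := exists_nat_pow_near hv1 one_lt_two
      refine ⟨k + 1, hk'.le, ?_⟩
      calc ((2 : ℝ) ^ (k + 1)) ^ m = 2 ^ m * (2 ^ k) ^ m := by ring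
        _ ≤ 2 ^ m * (1 + v ^ m) := by
          gcongr
          exact (pow_le_pow_left₀ (by positivity) hk m).trans (by simp)
  calc f (v * u) ≤ f (2 ^ k * u) := hf (by gcongr)
    _ ≤ C * ‖g (2 ^ k * u)‖ :=
      (le_abs_self _).trans (hfu _ (le_mul_of_one_le_left hu (one_le_pow₀ one_le_two)))
    _ ≤ C * ((2 ^ k) ^ m * ‖g u‖) := by gcongr; exact hgu k
    _ ≤ C * (2 ^ m * (1 + v ^ m) * ‖g u‖) := by gcongr
    _ = C * 2 ^ m * (1 + v ^ m) * ‖g u‖ := by ring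

lemma isLittleO_exp_mul_of_monotone (hf : Monotone f) (hf₀ : 0 ≤ f) (hfg : f =O[atTop] g)
    (hg : (fun u ↦ g (2 * u)) =O[atTop] g) {ε : ℝ} (hε : 0 < ε) :
    f =o[atTop] fun u ↦ Real.exp (ε * u) := by
  obtain ⟨C, m, hC⟩ := exists_comp_mul_le_of_monotone hf hfg hg
  obtain ⟨u, hu, hfu⟩ := ((eventually_gt_atTop 0).and hC).exists
  have hpoly : (fun w : ℝ ↦ C * ‖g u‖ * (w ^ 0 + (u ^ m)⁻¹ * w ^ m))
      =o[atTop] fun w ↦ Real.exp (ε * w) :=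
    ((isLittleO_pow_exp_pos_mul_atTop 0 hε).add
      ((isLittleO_pow_exp_pos_mul_atTop m hε).const_mul_left _)).const_mul_left _
  refine (Asymptotics.IsBigO.of_bound' ?_).trans_isLittleO hpoly
  filter_upwards [eventually_ge_atTop 0] with w hw
  rw [Real.norm_of_nonneg (hf₀ w)]
  calc f w = f (w / u * u) := by field_simp
    _ ≤ C * (1 + (w / u) ^ m) * ‖g u‖ := hfu _ (by positivity)
    _ = C * ‖g u‖ * (w ^ 0 + (u ^ m)⁻¹ * w ^ m) := by ring
    _ ≤ _ := Real.le_norm_self _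

lemma integrableOn_one_add_pow_mul_exp_neg (m : ℕ) :
    IntegrableOn (fun v : ℝ ↦ (1 + v ^ m) * Real.exp (-v)) (Set.Ioi 0) := by
  have h₀ := Real.GammaIntegral_convergent one_pos
  have hm := Real.GammaIntegral_convergent (s := (m : ℝ) + 1) (by positivity)
  refine (h₀.add hm).congr_fun (fun v _ ↦ ?_) measurableSet_Ioi
  simp
  ring

lemma eventually_integrableOn_comp_mul_mul_exp_neg (hf : Monotone f) (hf₀ : 0 ≤ f)
    (hfg : f =O[atTop] g) (hg : (fun u ↦ g (2 * u)) =O[atTop] g) :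
    ∀ᶠ t in atTop, IntegrableOn (fun v ↦ f (v * t) * Real.exp (-v)) (Set.Ioi 0) := by
  obtain ⟨C, m, hC⟩ := exists_comp_mul_le_of_monotone hf hfg hg
  filter_upwards [hC] with t ht
  refine ((integrableOn_one_add_pow_mul_exp_neg m).const_mul (C * ‖g t‖)).mono'
    (hf.measurable.comp (by fun_prop) |>.mul (by fun_prop)).aestronglyMeasurable ?_
  filter_upwards [ae_restrict_mem measurableSet_Ioi] with v hv
  rw [Real.norm_of_nonneg (mul_nonneg (hf₀ _) (Real.exp_nonneg _))]
  calc f (v * t) * Real.exp (-v) ≤ C * (1 + v ^ m) * ‖g t‖ * Real.exp (-v) := by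
        gcongr; exact ht v (Set.mem_Ioi.1 hv).le
    _ = C * ‖g t‖ * ((1 + v ^ m) * Real.exp (-v)) := by ring

/-- Karamata's Abelian theorem. -/
theorem IsRegularlyVarying.tendsto_integral_comp_mul_exp_neg_div (hg : IsRegularlyVarying g α)
    (hα : 0 < α + 1) (hf : Monotone f) (hf₀ : 0 ≤ f)
    (hfg : Tendsto (fun u ↦ f u / g u) atTop (𝓝 c)) :
    Tendsto (fun t ↦ (∫ v in Set.Ioi 0, f (v * t) * Real.exp (-v)) / g t) atTop
      (𝓝 (c * Real.Gamma (α + 1))) := by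
  obtain ⟨C, m, hC⟩ :=
    exists_comp_mul_le_of_monotone hf (hg.isBigO_of_tendsto_div hfg) (hg.isBigO_comp_mul two_pos)
  simp only [Real.Gamma_eq_integral hα, add_sub_cancel_right, ← integral_const_mul,
    ← integral_div]
  refine tendsto_integral_filter_of_dominated_convergence
    (fun v ↦ C * ((1 + v ^ m) * Real.exp (-v))) ?_ ?_
    ((integrableOn_one_add_pow_mul_exp_neg m).const_mul C) ?_
  · refine .of_forall fun t ↦ (Measurable.div_const ?_ _).aestronglyMeasurable
    exact (hf.measurable.comp (by fun_prop)).mul (by fun_prop)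
  · filter_upwards [hC, hg.eventually_pos] with t ht hgt
    filter_upwards [ae_restrict_mem measurableSet_Ioi] with v hv
    have hfv := ht v (Set.mem_Ioi.1 hv).le
    rw [Real.norm_of_nonneg hgt.le] at hfv
    rw [Real.norm_of_nonneg (div_nonneg (mul_nonneg (hf₀ _) (Real.exp_nonneg _)) hgt.le),
      div_le_iff₀ hgt]
    calc f (v * t) * Real.exp (-v) ≤ C * (1 + v ^ m) * g t * Real.exp (-v) := by gcongr
      _ = C * ((1 + v ^ m) * Real.exp (-v)) * g t := by ring
  · filter_upwards [ae_restrict_mem measurableSet_Ioi] with v hv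
    convert (hg.tendsto_comp_mul_div hfg hv).mul_const (Real.exp (-v)) using 2 <;> ring

end RegularVariation

section LaplaceTransform

variable {ι : Type*} {w s : ι → ℝ}

/-- The distribution function of the measure on `ℝ` that puts mass `w n` at the point `s n`,
meaningful when the masses left of every point are summable. -/
def cumulativeWeight (w s : ι → ℝ) (u : ℝ) : ℝ :=
  ∑' n, {n | s n ≤ u}.indicator w n

lemma cumulativeWeight_nonneg (hw : 0 ≤ w) : 0 ≤ cumulativeWeight w s :=
  fun _ ↦ tsum_nonneg (Set.indicator_nonneg fun n _ ↦ hw n)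

lemma cumulativeWeight_mono (hw : 0 ≤ w)
    (hsum : ∀ u, Summable ({n | s n ≤ u}.indicator w)) : Monotone (cumulativeWeight w s) :=
  fun u v huv ↦ (hsum u).tsum_mono (hsum v) <|
    Set.indicator_le_indicator_of_subset (fun _ hn ↦ le_trans hn huv) hw

lemma integral_indicator_le_mul_exp_neg {a t : ℝ} (ha : 0 ≤ a) (ht : 0 < t) (b : ℝ) :
    ∫ v in Set.Ioi 0, {v | a ≤ v * t}.indicator (fun v ↦ b * Real.exp (-v)) v =
      b * Real.exp (-(a / t)) := by
  have hIci : {v | a ≤ v * t} = Set.Ici (a / t) := by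
    ext v; simp [div_le_iff₀ ht]
  rw [hIci, ← integral_Ici_eq_integral_Ioi, setIntegral_indicator measurableSet_Ici,
    Set.Ici_inter_Ici, sup_eq_right.2 (by positivity), integral_Ici_eq_integral_Ioi,
    integral_const_mul, integral_exp_neg_Ioi]

lemma hasSum_mul_exp_neg_div [Countable ι] (hw : 0 ≤ w) (hs : 0 ≤ s)
    (hsum : ∀ u, Summable ({n | s n ≤ u}.indicator w)) {t : ℝ} (ht : 0 < t)
    (hint : IntegrableOn (fun v ↦ cumulativeWeight w s (v * t) * Real.exp (-v)) (Set.Ioi 0)) :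
    HasSum (fun n ↦ w n * Real.exp (-(s n / t)))
      (∫ v in Set.Ioi 0, cumulativeWeight w s (v * t) * Real.exp (-v)) := by
  let F : ι → ℝ → ℝ := fun n ↦ {v | s n ≤ v * t}.indicator fun v ↦ w n * Real.exp (-v)
  have hF₀ : ∀ n v, 0 ≤ F n v := fun n v ↦
    Set.indicator_nonneg (fun v _ ↦ mul_nonneg (hw n) (Real.exp_nonneg _)) v
  have hF_sum : ∀ v, HasSum (F · v) (cumulativeWeight w s (v * t) * Real.exp (-v)) := by
    intro v
    refine ((hsum (v * t)).hasSum.mul_right (Real.exp (-v))).congr_fun fun n ↦ ?_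
    simp [F, Set.indicator_apply, ite_mul]
  have hF_integral : ∀ n, ∫ v in Set.Ioi 0, F n v = w n * Real.exp (-(s n / t)) := fun n ↦
    integral_indicator_le_mul_exp_neg (hs n) ht (w n)
  simp only [← hF_integral]
  refine hasSum_integral_of_dominated_convergence F (fun n ↦ ?_)
    (fun n ↦ .of_forall fun v ↦ (Real.norm_of_nonneg (hF₀ n v)).le)
    (.of_forall fun v ↦ (hF_sum v).summable) ?_ (.of_forall hF_sum)
  · exact (Measurable.indicator (by fun_prop)
      (measurableSet_le (by fun_prop) (by fun_prop))).aestronglyMeasurable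
  · simpa only [IntegrableOn, (hF_sum _).tsum_eq] using hint

end LaplaceTransform

section PartialSums

variable {x : ℕ → ℝ} {g : ℝ → ℝ} {α c : ℝ}

/-- The partial sums of `x` on a logarithmic scale, matching the substitution `g u = G (exp u)`
that turns the scaling `t ↦ t ^ l` into `u ↦ l * u`. -/
def logPartialSum (x : ℕ → ℝ) (u : ℝ) : ℝ :=
  ∑ k ∈ Finset.range ⌊Real.exp u⌋₊, x k

/-- The sum of all terms of `x` which are at least `exp (-u)`, as a distribution function. Terms
`x n = 0`, for which `-log (x n)` is the junk value `0`, contribute nothing. -/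
def levelSum (x : ℕ → ℝ) : ℝ → ℝ :=
  cumulativeWeight x fun n ↦ -Real.log (x n)

lemma logPartialSum_nonneg (hx₀ : 0 ≤ x) : 0 ≤ logPartialSum x :=
  fun _ ↦ Finset.sum_nonneg fun k _ ↦ hx₀ k

lemma logPartialSum_mono (hx₀ : 0 ≤ x) : Monotone (logPartialSum x) := by
  intro u v huv
  refine Finset.sum_le_sum_of_subset_of_nonneg ?_ fun k _ _ ↦ hx₀ k
  gcongr

lemma succ_mul_le_logPartialSum_log (hx : Antitone x) (n : ℕ) :
    ((n : ℝ) + 1) * x n ≤ logPartialSum x (Real.log (n + 1)) := by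
  rw [logPartialSum, Real.exp_log (by positivity), ← Nat.cast_add_one, Nat.floor_natCast]
  simpa using Finset.card_nsmul_le_sum (Finset.range (n + 1)) x (x n)
    fun k hk ↦ hx (Finset.mem_range_succ_iff.1 hk)

lemma eventually_log_succ_le (hx : Antitone x)
    (hgrowth : ∀ ε : ℝ, 0 < ε → logPartialSum x =o[atTop] fun u ↦ Real.exp (ε * u))
    {l : ℝ} (hl : 1 < l) :
    ∀ᶠ u in atTop, ∀ n : ℕ, Real.exp (-u) ≤ x n → Real.log (n + 1) ≤ l * u := by
  have hl₀ : 0 < l := one_pos.trans hl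
  have hbound := (hgrowth (1 - l⁻¹) (sub_pos.2 (inv_lt_one_of_one_lt₀ hl))).def one_pos
  have hlu : Tendsto (fun u ↦ l * u) atTop atTop := tendsto_id.const_mul_atTop hl₀
  filter_upwards [hlu.eventually (eventually_forall_ge_atTop.2 hbound)] with u hu n hn
  by_contra! hlt
  set w := Real.log (n + 1) with hw
  have hexp : Real.exp (w - u) ≤ Real.exp ((1 - l⁻¹) * w) := by
    calc Real.exp (w - u) = ((n : ℝ) + 1) * Real.exp (-u) := by
          rw [sub_eq_add_neg, Real.exp_add, hw, Real.exp_log (by positivity)]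
      _ ≤ ((n : ℝ) + 1) * x n := by gcongr
      _ ≤ logPartialSum x w := succ_mul_le_logPartialSum_log hx n
      _ ≤ Real.exp ((1 - l⁻¹) * w) := by
        simpa using (le_abs_self _).trans (hu w hlt.le)
  have hwu : l⁻¹ * w ≤ u := by linarith [Real.exp_le_exp.1 hexp]
  exact hlt.not_ge ((inv_mul_le_iff₀ hl₀).1 hwu)

lemma eventually_indicator_level_eq_zero (hx₀ : 0 ≤ x) (hx : Antitone x)
    (hgrowth : ∀ ε : ℝ, 0 < ε → logPartialSum x =o[atTop] fun u ↦ Real.exp (ε * u))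
    {l : ℝ} (hl : 1 < l) :
    ∀ᶠ u in atTop, ∀ n ∉ Finset.range ⌊Real.exp (l * u)⌋₊,
      {n | -Real.log (x n) ≤ u}.indicator x n = 0 := by
  filter_upwards [eventually_log_succ_le hx hgrowth hl] with u hu n hn
  rw [Set.indicator_apply_eq_zero]
  intro hlevel
  by_contra hxn
  have hpos : 0 < x n := (hx₀ n).lt_of_ne' hxn
  have hlog := hu n ((Real.le_log_iff_exp_le hpos).1 (neg_le.1 hlevel))
  refine hn (Finset.mem_range.2 (Nat.le_floor ?_))
  rw [Real.log_le_iff_le_exp (by positivity)] at hlog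
  exact_mod_cast hlog

lemma summable_indicator_level (hx₀ : 0 ≤ x) (hx : Antitone x)
    (hgrowth : ∀ ε : ℝ, 0 < ε → logPartialSum x =o[atTop] fun u ↦ Real.exp (ε * u)) (u : ℝ) :
    Summable ({n | -Real.log (x n) ≤ u}.indicator x) := by
  obtain ⟨v, huv, hv⟩ := ((eventually_ge_atTop u).and
    (eventually_indicator_level_eq_zero hx₀ hx hgrowth one_lt_two)).exists
  exact (summable_of_ne_finset_zero hv).of_nonneg_of_le (Set.indicator_nonneg fun n _ ↦ hx₀ n)
    (Set.indicator_le_indicator_of_subset (fun _ hn ↦ le_trans hn huv) hx₀)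

lemma eventually_levelSum_le (hx₀ : 0 ≤ x) (hx : Antitone x)
    (hgrowth : ∀ ε : ℝ, 0 < ε → logPartialSum x =o[atTop] fun u ↦ Real.exp (ε * u))
    {l : ℝ} (hl : 1 < l) : ∀ᶠ u in atTop, levelSum x u ≤ logPartialSum x (l * u) := by
  filter_upwards [eventually_indicator_level_eq_zero hx₀ hx hgrowth hl] with u hu
  rw [levelSum, cumulativeWeight, tsum_eq_sum hu]
  exact Finset.sum_le_sum fun n _ ↦ Set.indicator_le_self' (fun n _ ↦ hx₀ n) n

/-- Fewer than `exp u` terms are counted on the left only, each of them below `exp (-u)`. -/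
lemma logPartialSum_sub_one_le_levelSum (hx₀ : 0 ≤ x) {u : ℝ}
    (hsum : Summable ({n | -Real.log (x n) ≤ u}.indicator x)) :
    logPartialSum x u - 1 ≤ levelSum x u := by
  have hterm : ∀ n, x n ≤ {n | -Real.log (x n) ≤ u}.indicator x n + Real.exp (-u) := by
    intro n
    by_cases hn : -Real.log (x n) ≤ u
    · simp [hn, Real.exp_nonneg]
    · simpa [hn] using (Real.le_exp_log (x n)).trans (Real.exp_le_exp.2 (by linarith))
  have hcount : (⌊Real.exp u⌋₊ : ℝ) * Real.exp (-u) ≤ 1 := by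
    calc (⌊Real.exp u⌋₊ : ℝ) * Real.exp (-u) ≤ Real.exp u * Real.exp (-u) := by
          gcongr; exact Nat.floor_le (Real.exp_nonneg u)
      _ = 1 := by rw [← Real.exp_add, add_neg_cancel, Real.exp_zero]
  have hpartial : ∑ n ∈ Finset.range ⌊Real.exp u⌋₊, {n | -Real.log (x n) ≤ u}.indicator x n ≤
      levelSum x u := hsum.sum_le_tsum _ fun n _ ↦ Set.indicator_nonneg (fun n _ ↦ hx₀ n) n
  rw [sub_le_iff_le_add]
  calc logPartialSum x u
      ≤ ∑ n ∈ Finset.range ⌊Real.exp u⌋₊,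
          ({n | -Real.log (x n) ≤ u}.indicator x n + Real.exp (-u)) :=
        Finset.sum_le_sum fun n _ ↦ hterm n
    _ = ∑ n ∈ Finset.range ⌊Real.exp u⌋₊, {n | -Real.log (x n) ≤ u}.indicator x n +
          ⌊Real.exp u⌋₊ * Real.exp (-u) := by simp [Finset.sum_add_distrib]
    _ ≤ levelSum x u + 1 := add_le_add hpartial hcount

lemma tendsto_of_le_of_forall_le_mul_rpow {ι : Type*} {L : Filter ι} {f lo : ι → ℝ}
    {up : ℝ → ι → ℝ} (hlo : Tendsto lo L (𝓝 c)) (hlof : lo ≤ᶠ[L] f)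
    (hup : ∀ l, 1 < l → Tendsto (up l) L (𝓝 (c * l ^ α))) (hfup : ∀ l, 1 < l → f ≤ᶠ[L] up l) :
    Tendsto f L (𝓝 c) := by
  refine tendsto_order.2 ⟨fun a ha ↦ ?_, fun a ha ↦ ?_⟩
  · filter_upwards [hlo.eventually_const_lt ha, hlof] with i hi hif using hi.trans_le hif
  · have hcont : ContinuousAt (fun l : ℝ ↦ c * l ^ α) 1 :=
      (Real.continuousAt_rpow_const 1 α (.inl one_ne_zero)).const_mul c
    have hlim : Tendsto (fun l : ℝ ↦ c * l ^ α) (𝓝[>] 1) (𝓝 c) := by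
      simpa using hcont.tendsto.mono_left nhdsWithin_le_nhds
    obtain ⟨l, hla, hl⟩ := ((hlim.eventually_lt_const ha).and self_mem_nhdsWithin).exists
    filter_upwards [(hup l hl).eventually_lt_const hla, hfup l hl] with i hi hif
      using hif.trans_lt hi

lemma IsRegularlyVarying.isLittleO_logPartialSum_exp (hg : IsRegularlyVarying g α) (hx₀ : 0 ≤ x)
    (hlim : Tendsto (fun u ↦ logPartialSum x u / g u) atTop (𝓝 c)) {ε : ℝ} (hε : 0 < ε) :
    logPartialSum x =o[atTop] fun u ↦ Real.exp (ε * u) :=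
  isLittleO_exp_mul_of_monotone (logPartialSum_mono hx₀) (logPartialSum_nonneg hx₀)
    (hg.isBigO_of_tendsto_div hlim) (hg.isBigO_comp_mul two_pos) hε

lemma IsRegularlyVarying.tendsto_levelSum_div (hg : IsRegularlyVarying g α)
    (hg_top : Tendsto g atTop atTop) (hx₀ : 0 ≤ x) (hx : Antitone x)
    (hlim : Tendsto (fun u ↦ logPartialSum x u / g u) atTop (𝓝 c)) :
    Tendsto (fun u ↦ levelSum x u / g u) atTop (𝓝 c) := by
  have hgrowth := fun ε hε ↦ hg.isLittleO_logPartialSum_exp hx₀ hlim (ε := ε) hε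
  have hlower : Tendsto (fun u ↦ logPartialSum x u / g u - 1 / g u) atTop (𝓝 c) := by
    simpa using hlim.sub (hg_top.const_div_atTop 1)
  refine tendsto_of_le_of_forall_le_mul_rpow hlower ?_
    (fun l hl ↦ hg.tendsto_comp_mul_div hlim (one_pos.trans hl)) fun l hl ↦ ?_
  · filter_upwards [hg.eventually_pos] with u hu
    rw [← sub_div]
    gcongr
    exact logPartialSum_sub_one_le_levelSum hx₀ (summable_indicator_level hx₀ hx hgrowth u)
  · filter_upwards [hg.eventually_pos, eventually_levelSum_le hx₀ hx hgrowth hl] with u hu hle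
    gcongr

lemma rpow_one_add_one_div {y t : ℝ} (hy : 0 ≤ y) (ht : 0 < t) :
    y ^ (1 + 1 / t) = y * Real.exp (-(-Real.log y / t)) := by
  rcases hy.eq_or_lt with rfl | hy
  · rw [Real.zero_rpow (by positivity), zero_mul]
  · rw [Real.rpow_add hy, Real.rpow_one, Real.rpow_def_of_pos hy]
    ring_nf

lemma IsRegularlyVarying.tendsto_tsum_rpow_div_of_le_one (hg : IsRegularlyVarying g α)
    (hα : 0 < α + 1) (hg_top : Tendsto g atTop atTop) (hx₀ : 0 ≤ x) (hx₁ : x ≤ 1)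
    (hx : Antitone x) (hlim : Tendsto (fun u ↦ logPartialSum x u / g u) atTop (𝓝 c)) :
    (∀ᶠ t : ℝ in atTop, Summable fun n ↦ x n ^ (1 + 1 / t)) ∧
      Tendsto (fun t : ℝ ↦ (∑' n, x n ^ (1 + 1 / t)) / g t) atTop
        (𝓝 (c * Real.Gamma (α + 1))) := by
  have hsum := summable_indicator_level hx₀ hx fun _ ↦ hg.isLittleO_logPartialSum_exp hx₀ hlim
  have hmono : Monotone (levelSum x) := cumulativeWeight_mono hx₀ hsum
  have hnonneg : 0 ≤ levelSum x := cumulativeWeight_nonneg hx₀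
  have hlevel := hg.tendsto_levelSum_div hg_top hx₀ hx hlim
  have hlaplace : ∀ᶠ t in atTop, HasSum (fun n ↦ x n ^ (1 + 1 / t))
      (∫ v in Set.Ioi 0, levelSum x (v * t) * Real.exp (-v)) := by
    filter_upwards [eventually_gt_atTop 0, eventually_integrableOn_comp_mul_mul_exp_neg hmono
      hnonneg (hg.isBigO_of_tendsto_div hlevel) (hg.isBigO_comp_mul two_pos)] with t ht hint
    simp only [rpow_one_add_one_div (hx₀ _) ht]
    exact hasSum_mul_exp_neg_div hx₀
      (fun n ↦ neg_nonneg.2 (Real.log_nonpos (hx₀ n) (hx₁ n))) hsum ht hint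
  refine ⟨hlaplace.mono fun t ht ↦ ht.summable, ?_⟩
  refine (hg.tendsto_integral_comp_mul_exp_neg_div hα hmono hnonneg hlevel).congr' ?_
  filter_upwards [hlaplace] with t ht
  rw [ht.tsum_eq]

lemma IsRegularlyVarying.tendsto_tsum_rpow_div (hg : IsRegularlyVarying g α) (hα : 0 < α + 1)
    (hg_top : Tendsto g atTop atTop) (hx₀ : 0 ≤ x) (hx : Antitone x)
    (hlim : Tendsto (fun u ↦ logPartialSum x u / g u) atTop (𝓝 c)) :
    (∀ᶠ t : ℝ in atTop, Summable fun n ↦ x n ^ (1 + 1 / t)) ∧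
      Tendsto (fun t : ℝ ↦ (∑' n, x n ^ (1 + 1 / t)) / g t) atTop
        (𝓝 (c * Real.Gamma (α + 1))) := by
  obtain ⟨K, hK, hxK⟩ : ∃ K, 0 < K ∧ x 0 ≤ K :=
    ⟨x 0 + 1, add_pos_of_nonneg_of_pos (hx₀ 0) one_pos, by linarith⟩
  have hlimK : Tendsto (fun u ↦ logPartialSum (fun n ↦ x n / K) u / g u) atTop (𝓝 (c / K)) := by
    refine (hlim.div_const K).congr fun u ↦ ?_
    rw [logPartialSum, logPartialSum, ← Finset.sum_div, div_right_comm]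
  obtain ⟨hsum, htendsto⟩ := hg.tendsto_tsum_rpow_div_of_le_one hα hg_top
    (fun n ↦ div_nonneg (hx₀ n) hK.le) (fun n ↦ (div_le_one hK).2 ((hx n.zero_le).trans hxK))
    (fun m n hmn ↦ div_le_div_of_nonneg_right (hx hmn) hK.le) hlimK
  simp only [Real.div_rpow (hx₀ _) hK.le, tsum_div_const] at hsum htendsto
  have hKpow : Tendsto (fun t : ℝ ↦ K ^ (1 + 1 / t)) atTop (𝓝 K) := by
    have hexponent : Tendsto (fun t : ℝ ↦ 1 + 1 / t) atTop (𝓝 1) := by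
      simpa using (tendsto_id.const_div_atTop (1 : ℝ)).const_add (1 : ℝ)
    simpa [Function.comp_def] using (Real.continuousAt_const_rpow hK.ne').tendsto.comp hexponent
  constructor
  · filter_upwards [hsum] with t ht
    exact (summable_div_const_iff (Real.rpow_pos_of_pos hK _).ne').1 ht
  · convert (hKpow.mul htendsto).congr fun t ↦ ?_ using 2
    · field_simp
    · have := (Real.rpow_pos_of_pos hK (1 + 1 / t)).ne'
      field_simp

end PartialSums

section LogarithmicScale

variable {G : ℝ → ℝ} {α c : ℝ}

lemma isRegularlyVarying_comp_exp (hG_top : Tendsto G atTop atTop)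
    (hrv : ∀ l : ℝ, 0 < l → Tendsto (fun t : ℝ ↦ G (t ^ l) / G t) atTop (𝓝 (l ^ α))) :
    IsRegularlyVarying (fun u ↦ G (Real.exp u)) α where
  eventually_pos := (hG_top.comp Real.tendsto_exp_atTop).eventually_gt_atTop 0
  tendsto_div l hl := by
    refine ((hrv l hl).comp Real.tendsto_exp_atTop).congr fun u ↦ ?_
    rw [Function.comp_apply, ← Real.exp_mul, mul_comm]

lemma eventually_le_floor_rpow {l : ℝ} (hl : 1 < l) : ∀ᶠ t : ℝ in atTop, t ≤ (⌊t⌋₊ : ℝ) ^ l := by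
  have hfloor : Tendsto (fun t : ℝ ↦ (⌊t⌋₊ : ℝ)) atTop atTop :=
    tendsto_natCast_atTop_atTop.comp tendsto_nat_floor_atTop
  filter_upwards [hfloor.eventually ((tendsto_rpow_atTop (sub_pos.2 hl)).eventually_ge_atTop 2),
    eventually_ge_atTop 1] with t ht ht₁
  have hfloor₁ : (1 : ℝ) ≤ ⌊t⌋₊ := by exact_mod_cast (Nat.one_le_floor_iff t).2 ht₁
  calc t ≤ ⌊t⌋₊ + 1 := (Nat.lt_floor_add_one t).le
    _ ≤ ⌊t⌋₊ * 2 := by linarith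
    _ ≤ ⌊t⌋₊ * (⌊t⌋₊ : ℝ) ^ (l - 1) := by gcongr
    _ = (⌊t⌋₊ : ℝ) ^ l := by
      rw [← Real.rpow_one_add' (by positivity) (by linarith), add_sub_cancel]

lemma tendsto_div_comp_floor (hG : MonotoneOn G (Set.Ici 0)) (hG_top : Tendsto G atTop atTop)
    (hrv : ∀ l : ℝ, 0 < l → Tendsto (fun t : ℝ ↦ G (t ^ l) / G t) atTop (𝓝 (l ^ α))) :
    Tendsto (fun t : ℝ ↦ G t / G ⌊t⌋₊) atTop (𝓝 1) := by
  have hfloor : Tendsto (fun t : ℝ ↦ (⌊t⌋₊ : ℝ)) atTop atTop :=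
    tendsto_natCast_atTop_atTop.comp tendsto_nat_floor_atTop
  have hpos : ∀ᶠ t : ℝ in atTop, 0 < G ⌊t⌋₊ := (hG_top.comp hfloor).eventually_gt_atTop 0
  refine tendsto_of_le_of_forall_le_mul_rpow (lo := 1) (up := fun l t ↦ G (⌊t⌋₊ ^ l) / G ⌊t⌋₊)
    (α := α) tendsto_const_nhds ?_ (fun l hl ↦ ?_) fun l hl ↦ ?_
  · filter_upwards [hpos, eventually_ge_atTop 0] with t hGt ht
    exact (one_le_div hGt).2 (hG (Nat.cast_nonneg ⌊t⌋₊ : (0 : ℝ) ≤ ⌊t⌋₊) ht (Nat.floor_le ht))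
  · simpa only [one_mul, Function.comp_def] using (hrv l (one_pos.trans hl)).comp hfloor
  · filter_upwards [hpos, eventually_ge_atTop 0, eventually_le_floor_rpow hl] with t hGt ht hle
    have := hG ht (ht.trans hle) hle
    gcongr

lemma tendsto_logPartialSum_div (hG : MonotoneOn G (Set.Ici 0)) (hG_top : Tendsto G atTop atTop)
    (hrv : ∀ l : ℝ, 0 < l → Tendsto (fun t : ℝ ↦ G (t ^ l) / G t) atTop (𝓝 (l ^ α)))
    {x : ℕ → ℝ} (hlim : Tendsto (fun n : ℕ ↦ (∑ k ∈ Finset.range (n + 1), x k) / G (n + 1)) atTop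
      (𝓝 c)) :
    Tendsto (fun u ↦ logPartialSum x u / G (Real.exp u)) atTop (𝓝 c) := by
  have hlim_nat : Tendsto (fun n : ℕ ↦ (∑ k ∈ Finset.range n, x k) / G n) atTop (𝓝 c) := by
    rw [← tendsto_add_atTop_iff_nat 1]
    simpa using hlim
  have hfloor : Tendsto (fun u ↦ ⌊Real.exp u⌋₊) atTop atTop :=
    tendsto_nat_floor_atTop.comp Real.tendsto_exp_atTop
  have hratio := (tendsto_div_comp_floor hG hG_top hrv).comp Real.tendsto_exp_atTop
  have hquot := (hlim_nat.comp hfloor).div hratio one_ne_zero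
  rw [div_one] at hquot
  refine hquot.congr' ?_
  have hpos := (hG_top.comp (tendsto_natCast_atTop_atTop.comp hfloor)).eventually_gt_atTop 0
  filter_upwards [hpos] with u hu
  exact div_div_div_cancel_right₀ hu.ne' _ _

end LogarithmicScale

/-- The summability excludes the junk value `0` of a divergent `∑'`. -/
theorem statement8_general {G : ℝ → ℝ} (hG : MonotoneOn G (Set.Ici 0))
    (hG_top : Tendsto G atTop atTop) {α : ℝ} (hα : 0 ≤ α)
    (hrv : ∀ l : ℝ, 0 < l → Tendsto (fun t : ℝ ↦ G (t ^ l) / G t) atTop (𝓝 (l ^ α)))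
    {x : ℕ → ℝ} (hx₀ : 0 ≤ x) (hx : Antitone x) {c : ℝ}
    (hlim : Tendsto (fun n : ℕ ↦ (∑ k ∈ Finset.range (n + 1), x k) / G (n + 1)) atTop (𝓝 c)) :
    (∀ᶠ t : ℝ in atTop, Summable fun n ↦ x n ^ (1 + 1 / t)) ∧
      Tendsto (fun t : ℝ ↦ (∑' n, x n ^ (1 + 1 / t)) / G (Real.exp t)) atTop
        (𝓝 (c * Real.Gamma (α + 1))) :=
  (isRegularlyVarying_comp_exp hG_top hrv).tendsto_tsum_rpow_div (by linarith)
    (hG_top.comp Real.tendsto_exp_atTop) hx₀ hx (tendsto_logPartialSum_div hG hG_top hrv hlim)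

omit [CompleteSpace H] in
lemma sv_nonneg (T : H →L[ℂ] H) : 0 ≤ sv T := by
  refine fun n ↦ Real.sInf_nonneg ?_
  rintro _ ⟨F, -, rfl⟩
  exact norm_nonneg _

omit [CompleteSpace H] in
lemma sv_antitone (T : H →L[ℂ] H) : Antitone (sv T) := by
  intro m n hmn
  refine csInf_le_csInf ⟨0, ?_⟩ ⟨‖T - 0‖, 0, by simp, rfl⟩ ?_
  · rintro _ ⟨F, -, rfl⟩
    exact norm_nonneg _
  · rintro _ ⟨F, hF, rfl⟩
    exact ⟨F, hF.trans (by exact_mod_cast hmn), rfl⟩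

/-- Lemma `limit lemma` in the paper: if `G ∈ Ω` satisfies
`G(t^λ)/G(t) → λ^α` and a positive `T ∈ M_G` has Cesàro-type limit `c > 0` of its singular
value sums, then its zeta-function has the asymptotic `c·Γ(α+1)·G(e^t)`. -/
theorem statement8
    {H : Type*} [NormedAddCommGroup H] [InnerProductSpace ℂ H] [CompleteSpace H]
    (e : HilbertBasis ℕ ℂ H)
    (G : ℝ → ℝ) (hG : MemOmega G) (α : ℝ) (hα : 0 ≤ α)
    (hrv : ∀ l : ℝ, 0 < l → Tendsto (fun t : ℝ => G (t ^ l) / G t) atTop (nhds (l ^ α)))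
    (T : H →L[ℂ] H) (hTcpt : IsCompactOperator ⇑T) (hTpos : T.IsPositive)
    (hTM : MemMG G T) (c : ℝ) (hc : 0 < c)
    (hlim : Tendsto (fun n : ℕ => (∑ k ∈ Finset.range (n + 1), sv T k) / G ((n : ℝ) + 1))
      atTop (nhds c)) :
    Tendsto (fun t : ℝ => (∑' n : ℕ, sv T n ^ (1 + 1 / t)) / G (Real.exp t))
      atTop (nhds (c * Real.Gamma (α + 1))) :=
  (statement8_general hG.mono hG.to_top hα hrv (sv_nonneg T) (sv_antitone T) hlim).2
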